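/- Assume α ≥ 1, λ is nondecreasing on [t₀,∞), b(t) > β'(t) + β(t)/t (equivalently w(t) > 0) for every t ≥ t₀, and (α−3)·w(t) − t·w'(t) ≥ 0 for every t ≥ t₀. Then for every z ∈ argmin Φ, the energy function E(t) = t²·w(t)·(Φ_{λ(t)}(x(t)) − Φ*) + (1/2)·‖(α−1)·(x(t)−z) + t·ẋ(t) + t·β(t)·∇Φ_{λ(t)}(x(t))‖² is nonincreasing on [t₀,∞). -/

import Mathlib

open Set MeasureTheory Filter Real

noncomputable section

/-- Convexity for extended-real-valued functions. -/
def EConvexOn {H : Type*} [NormedAddCommGroup H] [NormedSpace ℝ H] (f : H → EReal) : Prop :=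
  ∀ x y : H, ∀ a c : ℝ, 0 ≤ a → 0 ≤ c → a + c = 1 →
    f (a • x + c • y) ≤ (a : EReal) * f x + (c : EReal) * f y

/-- `p` is the proximal point of `f` with parameter `l` at `x`, i.e. the (unique) minimizer of
`y ↦ f y + ‖x - y‖² / (2l)`. -/
def IsProxPt {H : Type*} [NormedAddCommGroup H] [InnerProductSpace ℝ H]
    (f : H → EReal) (l : ℝ) (x p : H) : Prop :=
  ∀ y : H, f p + ((‖x - p‖ ^ 2 / (2 * l) : ℝ) : EReal)
      ≤ f y + ((‖x - y‖ ^ 2 / (2 * l) : ℝ) : EReal)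

/-- The Moreau envelope of `f` with parameter `l` (as a real number). -/
def moreau {H : Type*} [NormedAddCommGroup H] [InnerProductSpace ℝ H]
    (f : H → EReal) (l : ℝ) (x : H) : ℝ :=
  (⨅ y : H, f y + ((‖x - y‖ ^ 2 / (2 * l) : ℝ) : EReal)).toReal

/-!
Write `g t = (lam t)⁻¹ • (x t - p t)` for the gradient of the Moreau envelope along the trajectory
and `w t = b t - β' t - β t / t`. The ODE says exactly that the vector inside the norm of the energy
has derivative `-(t * w t) • g t`. The chain rule for `t ↦ moreau Φ (lam t) (x t)` is the envelope
theorem: the value at `s` is at most the objective of `s` evaluated at `p t`, and conversely, so the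
difference quotient is squeezed; the outcome is `⟪g, v⟫ - lam' / 2 * ‖g‖²`, where the last term has
the right sign as `lam` increases. The `⟪g, v⟫` terms cancel in the derivative of the energy, and
convexity, `moreau Φ (lam t) (x t) - Φ z ≤ ⟪g, x t - z⟫`, disposes of the remaining inner product.
-/

open scoped Topology

section Calculus

lemma continuousWithinAt_of_inv_smul_sub {X 𝕜 E : Type*} [TopologicalSpace X] [DivisionRing 𝕜]
    [TopologicalSpace 𝕜] [AddCommGroup E] [Module 𝕜 E] [TopologicalSpace E]
    [IsTopologicalAddGroup E] [ContinuousSMul 𝕜 E] {lam : X → 𝕜} {x p : X → E} {s : Set X} {t : X}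
    (ht : t ∈ s) (hlam0 : ∀ y ∈ s, lam y ≠ 0) (hlam : ContinuousWithinAt lam s t)
    (hx : ContinuousWithinAt x s t)
    (hg : ContinuousWithinAt (fun y => (lam y)⁻¹ • (x y - p y)) s t) :
    ContinuousWithinAt p s t := by
  refine (hx.sub (hlam.smul hg)).congr_of_mem (fun y hy => ?_) ht
  simp [smul_inv_smul₀ (hlam0 y hy)]

variable {s : Set ℝ} {t : ℝ}

lemma hasDerivWithinAt_of_le_of_le {m l u : ℝ → ℝ} {d : ℝ}
    (hl : HasDerivWithinAt l d s t) (hu : HasDerivWithinAt u d s t)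
    (hlt : l t = m t) (hut : u t = m t)
    (hlm : ∀ᶠ y in 𝓝[s] t, l y ≤ m y) (hmu : ∀ᶠ y in 𝓝[s] t, m y ≤ u y) :
    HasDerivWithinAt m d s t := by
  rw [hasDerivWithinAt_iff_isLittleO, Asymptotics.isLittleO_iff] at *
  intro c hc
  filter_upwards [hl hc, hu hc, hlm, hmu] with y hly huy hlmy hmuy
  rw [Real.norm_eq_abs, abs_le] at *
  constructor <;> linarith

variable {E : Type*} [NormedAddCommGroup E] [InnerProductSpace ℝ E]

lemma hasDerivWithinAt_inner_of_eq_zero {u c : ℝ → E} {u' : E}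
    (hu : HasDerivWithinAt u u' s t) (hut : u t = 0) (hc : ContinuousWithinAt c s t) :
    HasDerivWithinAt (fun y => inner ℝ (u y) (c y)) (inner ℝ u' (c t)) s t := by
  rw [hasDerivWithinAt_iff_tendsto_slope] at *
  refine (hu.inner (hc.mono_left (nhdsWithin_mono t sdiff_subset))).congr fun y => ?_
  simp only [slope_def_module, hut, inner_zero_left, sub_zero, real_inner_smul_left, smul_eq_mul]

lemma norm_sq_div_sub_norm_sq_div (a b : E) (k l : ℝ) :
    ‖a‖ ^ 2 / k - ‖b‖ ^ 2 / l = inner ℝ (a - b) (l⁻¹ • (a + b)) + ‖a‖ ^ 2 * (k⁻¹ - l⁻¹) := by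
  rw [real_inner_smul_right, inner_sub_left, inner_add_right, inner_add_right,
    real_inner_self_eq_norm_sq, real_inner_self_eq_norm_sq, real_inner_comm b a]
  ring

lemma hasDerivWithinAt_norm_sq_div_sub_norm_sq_div {lam : ℝ → ℝ} {x q : ℝ → E} {l' : ℝ} {v : E}
    (hlt : lam t ≠ 0) (hlam : HasDerivWithinAt lam l' s t) (hx : HasDerivWithinAt x v s t)
    (hq : ContinuousWithinAt q s t) :
    HasDerivWithinAt
      (fun y => ‖x y - q y‖ ^ 2 / (2 * lam y) - ‖x t - q y‖ ^ 2 / (2 * lam t))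
      (inner ℝ ((lam t)⁻¹ • (x t - q t)) v - l' / 2 * ‖(lam t)⁻¹ • (x t - q t)‖ ^ 2) s t := by
  simp only [norm_sq_div_sub_norm_sq_div, sub_sub_sub_cancel_right]
  have hxq : ContinuousWithinAt (fun y => x y - q y) s t := hx.continuousWithinAt.sub hq
  have hx_part := hasDerivWithinAt_inner_of_eq_zero (hx.sub_const (x t)) (sub_self _)
    ((hxq.add (hq.const_sub (x t))).const_smul (2 * lam t)⁻¹)
  have hlam_part := hasDerivWithinAt_inner_of_eq_zero
    (((hlam.const_mul 2).fun_inv (mul_ne_zero two_ne_zero hlt)).sub_const (2 * lam t)⁻¹)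
    (sub_self _) (hxq.norm.pow 2)
  refine (hx_part.add hlam_part).congr_deriv ?_
  simp only [Pi.smul_apply, Pi.add_apply, Pi.pow_apply, RCLike.inner_apply, conj_trivial,
    norm_smul, real_inner_smul_right, inner_add_right, real_inner_comm v, norm_inv,
    Real.norm_eq_abs, mul_pow, inv_pow, sq_abs]
  field_simp
  ring

end Calculus

section Moreau

lemma EConvexOn.le_coe {E : Type*} [NormedAddCommGroup E] [NormedSpace ℝ E] {f : E → EReal}
    (hf : EConvexOn f) {x y : E} {a c r q : ℝ} (ha : 0 ≤ a) (hc : 0 ≤ c)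
    (hac : a + c = 1) (hx : f x = r) (hy : f y = q) :
    f (a • x + c • y) ≤ ((a * r + c * q : ℝ) : EReal) := by
  simpa only [hx, hy, EReal.coe_add, EReal.coe_mul] using hf x y a c ha hc hac

variable {H : Type*} [NormedAddCommGroup H] [InnerProductSpace ℝ H] {f : H → EReal}

namespace IsProxPt

variable {l r : ℝ} {x p y z : H}

lemma ne_top (hp : IsProxPt f l x p) (hf : ∃ y, f y ≠ ⊤) : f p ≠ ⊤ := by
  obtain ⟨y, hy⟩ := hf
  intro hptop
  have hle := hp y
  rw [hptop, EReal.top_add_coe, top_le_iff] at hle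
  exact EReal.add_ne_top hy (EReal.coe_ne_top _) hle

lemma moreau_eq (hp : IsProxPt f l x p) (hr : f p = r) :
    moreau f l x = r + ‖x - p‖ ^ 2 / (2 * l) := by
  have hinf : ⨅ y, f y + ((‖x - y‖ ^ 2 / (2 * l) : ℝ) : EReal)
      = f p + ((‖x - p‖ ^ 2 / (2 * l) : ℝ) : EReal) :=
    le_antisymm (iInf_le _ p) (le_iInf hp)
  rw [moreau, hinf, hr, ← EReal.coe_add, EReal.toReal_coe]

lemma moreau_le {q : ℝ} (hp : IsProxPt f l x p) (hr : f p = r) (hy : f y ≤ q) :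
    moreau f l x ≤ q + ‖x - y‖ ^ 2 / (2 * l) := by
  rw [hp.moreau_eq hr]
  have hle := (hp y).trans (add_le_add_left hy _)
  rw [hr] at hle
  exact_mod_cast hle

lemma le_moreau {q : ℝ} (hp : IsProxPt f l x p) (hl : 0 ≤ l) (hr : f p = r) (hq : f z = q)
    (hz : ∀ y, f z ≤ f y) : q ≤ moreau f l x := by
  have hqr : q ≤ r := by simpa only [hq, hr, EReal.coe_le_coe_iff] using hz p
  rw [hp.moreau_eq hr]
  exact hqr.trans (le_add_of_nonneg_right (by positivity))

lemma sub_le_inner_add {q e : ℝ} (hp : IsProxPt f l x p) (hf : EConvexOn f) (hl : 0 < l)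
    (hr : f p = r) (hq : f z = q) (he : 0 < e) (he1 : e ≤ 1) :
    r - q ≤ inner ℝ (l⁻¹ • (x - p)) (p - z) + e * (‖p - z‖ ^ 2 / (2 * l)) := by
  -- compare `p` with a point of the segment from `p` to `z`
  have hseg := hp.moreau_le hr
    (hf.le_coe (sub_nonneg.2 he1) he.le (sub_add_cancel 1 e) hr hq)
  have hexpand : ‖x - ((1 - e) • p + e • z)‖ ^ 2 / (2 * l) = ‖x - p‖ ^ 2 / (2 * l)
      + e * (inner ℝ (l⁻¹ • (x - p)) (p - z) + e * (‖p - z‖ ^ 2 / (2 * l))) := by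
    rw [show x - ((1 - e) • p + e • z) = (x - p) + e • (p - z) by module, norm_add_sq_real,
      real_inner_smul_left, real_inner_smul_right, norm_smul, mul_pow, Real.norm_eq_abs, sq_abs]
    field_simp
    ring
  rw [hp.moreau_eq hr, hexpand] at hseg
  refine le_of_mul_le_mul_left ?_ he
  linarith

lemma sub_le_inner {q : ℝ} (hp : IsProxPt f l x p) (hf : EConvexOn f) (hl : 0 < l)
    (hr : f p = r) (hq : f z = q) : r - q ≤ inner ℝ (l⁻¹ • (x - p)) (p - z) := by
  have hlim : Tendsto
      (fun e : ℝ => inner ℝ (l⁻¹ • (x - p)) (p - z) + e * (‖p - z‖ ^ 2 / (2 * l)))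
      (𝓝[>] 0) (𝓝 (inner ℝ (l⁻¹ • (x - p)) (p - z))) :=
    (Continuous.tendsto' (by fun_prop) 0 _ (by simp)).mono_left nhdsWithin_le_nhds
  refine ge_of_tendsto hlim ?_
  filter_upwards [Ioc_mem_nhdsGT zero_lt_one] with e he
  exact hp.sub_le_inner_add hf hl hr hq he.1 he.2

lemma moreau_sub_le_inner {q : ℝ} (hp : IsProxPt f l x p) (hf : EConvexOn f) (hl : 0 < l)
    (hr : f p = r) (hq : f z = q) : moreau f l x - q ≤ inner ℝ (l⁻¹ • (x - p)) (x - z) := by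
  have hsplit : inner ℝ (l⁻¹ • (x - p)) (x - z)
      = ‖x - p‖ ^ 2 / l + inner ℝ (l⁻¹ • (x - p)) (p - z) := by
    rw [← sub_add_sub_cancel x p z, inner_add_right, real_inner_smul_left,
      real_inner_self_eq_norm_sq, div_eq_inv_mul]
  have hhalf : ‖x - p‖ ^ 2 / (2 * l) ≤ ‖x - p‖ ^ 2 / l := by gcongr; linarith
  rw [hp.moreau_eq hr]
  linarith [hp.sub_le_inner hf hl hr hq]

end IsProxPt

lemma hasDerivWithinAt_moreau {s : Set ℝ} {lam φ : ℝ → ℝ} {x p : ℝ → H} {t l' : ℝ} {v : H}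
    (ht : t ∈ s) (hlt : lam t ≠ 0) (hφ : ∀ y ∈ s, f (p y) = φ y)
    (hp : ∀ y ∈ s, IsProxPt f (lam y) (x y) (p y)) (hlam : HasDerivWithinAt lam l' s t)
    (hx : HasDerivWithinAt x v s t) (hpc : ContinuousWithinAt p s t) :
    HasDerivWithinAt (fun y => moreau f (lam y) (x y))
      (inner ℝ ((lam t)⁻¹ • (x t - p t)) v - l' / 2 * ‖(lam t)⁻¹ • (x t - p t)‖ ^ 2) s t := by
  have hlower := (hasDerivWithinAt_norm_sq_div_sub_norm_sq_div hlt hlam hx hpc).const_add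
    (moreau f (lam t) (x t))
  have hupper := (hasDerivWithinAt_norm_sq_div_sub_norm_sq_div hlt hlam hx
    (continuousWithinAt_const (b := p t))).const_add (moreau f (lam t) (x t))
  refine hasDerivWithinAt_of_le_of_le hlower hupper (by simp) (by simp) ?_ ?_ <;>
    filter_upwards [self_mem_nhdsWithin] with y hy
  · rw [(hp y hy).moreau_eq (hφ y hy)]
    linarith [(hp t ht).moreau_le (hφ t ht) (hφ y hy).le]
  · rw [(hp t ht).moreau_eq (hφ t ht)]
    linarith [(hp y hy).moreau_le (hφ y hy) (hφ t ht).le]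

end Moreau

section InertialDynamics

variable {E : Type*} [NormedAddCommGroup E] [NormedSpace ℝ E]

/-- The vector whose squared norm enters the Lyapunov function: the displacement of the position
`x` from the anchor `z`, corrected by the velocity `v` and the gradient `g` along the trajectory. -/
def anchoredMomentum (α : ℝ) (β : ℝ → ℝ) (x v g : ℝ → E) (z : E) (t : ℝ) : E :=
  (α - 1) • (x t - z) + t • v t + (t * β t) • g t

/-- The weight `w` of the paper. As for all functions of time here, the derivative `β'` of `β` is a
separate argument. -/
def gapWeight (b β β' : ℝ → ℝ) (t : ℝ) : ℝ :=
  b t - β' t - β t / t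

/-- The Lyapunov function of the inertial dynamics, where `m t` stands for the gap between the
objective at time `t` and its optimal value, and `w` weighs that gap. -/
def inertialEnergy (α : ℝ) (β w m : ℝ → ℝ) (x v g : ℝ → E) (z : E) (t : ℝ) : ℝ :=
  t ^ 2 * w t * m t + (1 / 2) * ‖anchoredMomentum α β x v g z t‖ ^ 2

lemma hasDerivWithinAt_anchoredMomentum {s : Set ℝ} {t α : ℝ} {β b β' : ℝ → ℝ} {x v g : ℝ → E}
    {acc g' : E} (z : E) (ht : t ≠ 0) (hβ : HasDerivWithinAt β (β' t) s t)
    (hx : HasDerivWithinAt x (v t) s t) (hv : HasDerivWithinAt v acc s t)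
    (hg : HasDerivWithinAt g g' s t)
    (hode : acc + (α / t) • v t + β t • g' + b t • g t = 0) :
    HasDerivWithinAt (anchoredMomentum α β x v g z) (-((t * gapWeight b β β' t) • g t)) s t := by
  have hid := hasDerivWithinAt_id t s
  refine (((hx.sub_const z).const_smul (α - 1)).add (hid.smul hv) |>.add
    ((hid.mul hβ).smul hg)).congr_deriv ?_
  have hacc : acc = -((α / t) • v t + β t • g' + b t • g t) := by
    rw [eq_neg_iff_add_eq_zero, ← hode]
    abel
  simp only [hacc, gapWeight, id, Pi.mul_apply]
  match_scalars <;> field_simp <;> ring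

variable {H : Type*} [NormedAddCommGroup H] [InnerProductSpace ℝ H]

lemma hasDerivWithinAt_inertialEnergy {s : Set ℝ} {t α w' m' : ℝ} {β w m : ℝ → ℝ}
    {x v g : ℝ → H} {z : H} (hw : HasDerivWithinAt w w' s t) (hm : HasDerivWithinAt m m' s t)
    (hy : HasDerivWithinAt (anchoredMomentum α β x v g z) (-((t * w t) • g t)) s t) :
    HasDerivWithinAt (inertialEnergy α β w m x v g z)
      ((2 * t * w t + t ^ 2 * w') * m t + t ^ 2 * w t * m'
        - t * w t * inner ℝ (anchoredMomentum α β x v g z t) (g t)) s t := by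
  have hsq : HasDerivWithinAt (fun y : ℝ => y ^ 2) (2 * t) s t := by
    simpa using (hasDerivAt_pow 2 t).hasDerivWithinAt
  refine (((hsq.mul hw).mul hm).add (hy.norm_sq.const_mul (1 / 2 : ℝ))).congr_deriv ?_
  rw [inner_neg_right, real_inner_smul_right]
  simp only [Pi.mul_apply]
  ring

lemma inertialEnergy_deriv_nonpos {t α w' m' : ℝ} {β w m : ℝ → ℝ} {x v g : ℝ → H} {z : H}
    (ht : 0 ≤ t) (hα : 1 ≤ α) (hβ : 0 ≤ β t) (hw : 0 ≤ w t)
    (hgrowth : 0 ≤ (α - 3) * w t - t * w') (hm0 : 0 ≤ m t) (hm : m t ≤ inner ℝ (g t) (x t - z))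
    (hm' : m' ≤ inner ℝ (g t) (v t)) :
    (2 * t * w t + t ^ 2 * w') * m t + t ^ 2 * w t * m'
      - t * w t * inner ℝ (anchoredMomentum α β x v g z t) (g t) ≤ 0 := by
  have hinner : inner ℝ (anchoredMomentum α β x v g z t) (g t)
      = (α - 1) * inner ℝ (g t) (x t - z) + t * inner ℝ (g t) (v t) + t * β t * ‖g t‖ ^ 2 := by
    rw [anchoredMomentum, real_inner_comm, inner_add_right, inner_add_right, real_inner_smul_right,
      real_inner_smul_right, real_inner_smul_right, real_inner_self_eq_norm_sq]
  have hweight : 0 ≤ t * (((α - 3) * w t - t * w') * m t) := by positivity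
  have hconvex : 0 ≤ t * w t * (α - 1) * (inner ℝ (g t) (x t - z) - m t) :=
    mul_nonneg (mul_nonneg (by positivity) (sub_nonneg.2 hα)) (sub_nonneg.2 hm)
  have hchain : 0 ≤ t ^ 2 * w t * (inner ℝ (g t) (v t) - m') :=
    mul_nonneg (by positivity) (sub_nonneg.2 hm')
  have hdamping : 0 ≤ t ^ 2 * β t * w t * ‖g t‖ ^ 2 := by positivity
  rw [hinner]
  linarith

theorem antitoneOn_inertialEnergy {t₀ α : ℝ} {β b β' w' m m' : ℝ → ℝ} {x v acc g g' : ℝ → H}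
    {z : H} (ht₀ : 0 < t₀) (hα : 1 ≤ α) (hβ : ∀ t ≥ t₀, 0 ≤ β t)
    (hβ' : ∀ t ≥ t₀, HasDerivWithinAt β (β' t) (Ici t₀) t)
    (hw : ∀ t ≥ t₀, 0 ≤ gapWeight b β β' t)
    (hw' : ∀ t ≥ t₀, HasDerivWithinAt (gapWeight b β β') (w' t) (Ici t₀) t)
    (hgrowth : ∀ t ≥ t₀, 0 ≤ (α - 3) * gapWeight b β β' t - t * w' t)
    (hx : ∀ t ≥ t₀, HasDerivWithinAt x (v t) (Ici t₀) t)
    (hv : ∀ t ≥ t₀, HasDerivWithinAt v (acc t) (Ici t₀) t)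
    (hg : ∀ t ≥ t₀, HasDerivWithinAt g (g' t) (Ici t₀) t)
    (hode : ∀ t ≥ t₀, acc t + (α / t) • v t + β t • g' t + b t • g t = 0)
    (hm' : ∀ t ≥ t₀, HasDerivWithinAt m (m' t) (Ici t₀) t)
    (hm0 : ∀ t ≥ t₀, 0 ≤ m t) (hm : ∀ t ≥ t₀, m t ≤ inner ℝ (g t) (x t - z))
    (hmv : ∀ t ≥ t₀, m' t ≤ inner ℝ (g t) (v t)) :
    AntitoneOn (inertialEnergy α β (gapWeight b β β') m x v g z) (Ici t₀) := by
  have hpos (t : ℝ) (ht : t₀ ≤ t) : 0 < t := ht₀.trans_le ht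
  have hE (t : ℝ) (ht : t₀ ≤ t) := hasDerivWithinAt_inertialEnergy (hw' t ht) (hm' t ht)
    (hasDerivWithinAt_anchoredMomentum z (hpos t ht).ne' (hβ' t ht) (hx t ht) (hv t ht) (hg t ht)
      (hode t ht))
  have hE_nonpos (t : ℝ) (ht : t₀ ≤ t) := inertialEnergy_deriv_nonpos (hpos t ht).le hα (hβ t ht)
    (hw t ht) (hgrowth t ht) (hm0 t ht) (hm t ht) (hmv t ht)
  exact antitoneOn_of_hasDerivWithinAt_nonpos (convex_Ici t₀)
    (fun t ht => (hE t ht).continuousWithinAt)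
    (fun t ht => (hE t (interior_subset ht)).mono interior_subset)
    (fun t ht => hE_nonpos t (interior_subset ht))

end InertialDynamics

theorem moreau_energy_antitone_general
    {H : Type*} [NormedAddCommGroup H] [InnerProductSpace ℝ H] (Φ : H → EReal)
    (hΦbot : ∀ y, Φ y ≠ ⊥) (hΦproper : ∃ y, Φ y ≠ ⊤) (hΦconv : EConvexOn Φ)
    (t₀ α : ℝ) (ht₀ : 0 < t₀) (β b lam β' lam' w' : ℝ → ℝ)
    (hβ : ∀ t ≥ t₀, 0 ≤ β t) (hlam : ∀ t ≥ t₀, 0 < lam t)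
    (hβ' : ∀ t ≥ t₀, HasDerivWithinAt β (β' t) (Ici t₀) t)
    (hlam' : ∀ t ≥ t₀, HasDerivWithinAt lam (lam' t) (Ici t₀) t)
    (hw' : ∀ t ≥ t₀, HasDerivWithinAt (fun s => b s - β' s - β s / s) (w' t) (Ici t₀) t)
    (x v acc p G' : ℝ → H)
    (hx : ∀ t ≥ t₀, HasDerivWithinAt x (v t) (Ici t₀) t)
    (hv : ∀ t ≥ t₀, HasDerivWithinAt v (acc t) (Ici t₀) t)
    (hp : ∀ t ≥ t₀, IsProxPt Φ (lam t) (x t) (p t))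
    (hG' : ∀ t ≥ t₀, HasDerivWithinAt (fun s => (lam s)⁻¹ • (x s - p s)) (G' t) (Ici t₀) t)
    (hode : ∀ t ≥ t₀, acc t + (α / t) • v t + β t • G' t
        + b t • ((lam t)⁻¹ • (x t - p t)) = 0)
    (hα : 1 ≤ α) (hlam_mono : MonotoneOn lam (Ici t₀))
    (hw : ∀ t ≥ t₀, β' t + β t / t ≤ b t)
    (hgrowth : ∀ t ≥ t₀, 0 ≤ (α - 3) * (b t - β' t - β t / t) - t * w' t)
    (z : H) (hz : ∀ y, Φ z ≤ Φ y) :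
    AntitoneOn (fun t =>
      t ^ 2 * (b t - β' t - β t / t) * (moreau Φ (lam t) (x t) - (Φ z).toReal)
        + (1 / 2) * ‖(α - 1) • (x t - z) + t • v t
            + (t * β t) • ((lam t)⁻¹ • (x t - p t))‖ ^ 2)
      (Ici t₀) := by
  have hφ (t : ℝ) (ht : t₀ ≤ t) : Φ (p t) = ((Φ (p t)).toReal : EReal) :=
    (EReal.coe_toReal ((hp t ht).ne_top hΦproper) (hΦbot _)).symm
  have hφz : Φ z = ((Φ z).toReal : EReal) :=
    (EReal.coe_toReal (hΦproper.elim fun y hy => ne_top_of_le_ne_top hy (hz y)) (hΦbot z)).symm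
  have hp_cont (t : ℝ) (ht : t₀ ≤ t) : ContinuousWithinAt p (Ici t₀) t :=
    continuousWithinAt_of_inv_smul_sub ht (fun s hs => (hlam s hs).ne')
      (hlam' t ht).continuousWithinAt (hx t ht).continuousWithinAt (hG' t ht).continuousWithinAt
  have hlam'_nonneg (t : ℝ) (ht : t₀ ≤ t) : 0 ≤ lam' t :=
    (hlam' t ht).derivWithin (uniqueDiffOn_Ici t₀ t ht) ▸ hlam_mono.derivWithin_nonneg
  exact antitoneOn_inertialEnergy ht₀ hα hβ hβ'
    (fun t ht => by rw [gapWeight]; linarith [hw t ht]) hw' hgrowth hx hv hG' hode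
    (fun t ht => (hasDerivWithinAt_moreau ht (hlam t ht).ne' hφ hp (hlam' t ht) (hx t ht)
      (hp_cont t ht)).sub_const _)
    (fun t ht => sub_nonneg.2 ((hp t ht).le_moreau (hlam t ht).le (hφ t ht) hφz hz))
    (fun t ht => (hp t ht).moreau_sub_le_inner hΦconv (hlam t ht) (hφ t ht) hφz)
    (fun t ht => sub_le_self _
      (mul_nonneg (div_nonneg (hlam'_nonneg t ht) zero_le_two) (sq_nonneg _)))

theorem moreau_energy_antitone
    {H : Type*} [NormedAddCommGroup H] [InnerProductSpace ℝ H] [CompleteSpace H]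
    (Φ : H → EReal)
    (hΦbot : ∀ y, Φ y ≠ ⊥) (hΦproper : ∃ y, Φ y ≠ ⊤)
    (hΦconv : EConvexOn Φ) (hΦlsc : LowerSemicontinuous Φ)
    (t₀ α : ℝ) (ht₀ : 0 < t₀)
    (β b lam β' b' lam' w' : ℝ → ℝ)
    (hβnonneg : ∀ t ≥ t₀, 0 ≤ β t)
    (hbpos : ∀ t ≥ t₀, 0 < b t)
    (hlampos : ∀ t ≥ t₀, 0 < lam t)
    (hβ' : ∀ t ≥ t₀, HasDerivAt β (β' t) t)
    (hb' : ∀ t ≥ t₀, HasDerivAt b (b' t) t)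
    (hlam' : ∀ t ≥ t₀, HasDerivAt lam (lam' t) t)
    (hw' : ∀ t ≥ t₀, HasDerivAt (fun s => b s - β' s - β s / s) (w' t) t)
    (x v acc p G' : ℝ → H)
    (hx : ∀ t ≥ t₀, HasDerivAt x (v t) t)
    (hv : ∀ t ≥ t₀, HasDerivAt v (acc t) t)
    (hp : ∀ t ≥ t₀, IsProxPt Φ (lam t) (x t) (p t))
    (hG' : ∀ t ≥ t₀, HasDerivAt (fun s => (lam s)⁻¹ • (x s - p s)) (G' t) t)
    (hode : ∀ t ≥ t₀, acc t + (α / t) • v t + β t • G' t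
        + b t • ((lam t)⁻¹ • (x t - p t)) = 0)
    (hα : 1 ≤ α)
    (hlammono : MonotoneOn lam (Set.Ici t₀))
    (hw : ∀ t ≥ t₀, β' t + β t / t < b t)
    (hAs1 : ∀ t ≥ t₀, 0 ≤ (α - 3) * (b t - β' t - β t / t) - t * w' t)
    (z : H) (hz : ∀ y, Φ z ≤ Φ y)
    :
    AntitoneOn (fun t =>
      t ^ 2 * (b t - β' t - β t / t) * (moreau Φ (lam t) (x t) - (Φ z).toReal)
        + (1 / 2) * ‖(α - 1) • (x t - z) + t • v t
            + (t * β t) • ((lam t)⁻¹ • (x t - p t))‖ ^ 2)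
      (Set.Ici t₀) := by
  exact moreau_energy_antitone_general Φ hΦbot hΦproper hΦconv t₀ α ht₀ β b lam β' lam' w' hβnonneg
    hlampos (fun t ht => (hβ' t ht).hasDerivWithinAt) (fun t ht => (hlam' t ht).hasDerivWithinAt)
    (fun t ht => (hw' t ht).hasDerivWithinAt) x v acc p G' (fun t ht => (hx t ht).hasDerivWithinAt)
    (fun t ht => (hv t ht).hasDerivWithinAt) hp (fun t ht => (hG' t ht).hasDerivWithinAt) hode hα
    hlammono (fun t ht => (hw t ht).le) hAs1 z hz
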